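/- arXiv:1912.08719 — 4 statements merged into one kernel-verified Lean document; each statement's English description precedes it below -/
import Mathlib

section
/- Let λ > 0, λ̄ > 0, μ > 0, μ̄ > 0, d > 0 and 0 ≤ a < b. Let ψ : ℝ → ℝ be bounded, measurable, continuous on [0,∞), and differentiable on [a,b], and suppose that for all x ∈ [a,b]: d·ψ′(x) + (λ+λ̄)·ψ(x) = (λ/μ)·e^{−x/μ}·∫_0^x ψ(u)·e^{u/μ} du + λ·e^{−x/μ} + (λ̄/μ̄)·e^{x/μ̄}·∫_x^∞ ψ(u)·e^{−u/μ̄} du. Then ψ is twice differentiable on [a,b] and for all x ∈ [a,b]: d·μ·ψ″(x) + (d + μ(λ+λ̄))·ψ′(x) + λ̄·(1 + μ/μ̄)·ψ(x) = (λ̄/μ̄)·(1 + μ/μ̄)·e^{x/μ̄}·∫_x^∞ ψ(u)·e^{−u/μ̄} du. -/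
open Real Set intervalIntegral

theorem stmt_3 (lam lamBar mu muBar d a b : ℝ)
    (hlam : 0 < lam) (hlamBar : 0 < lamBar) (hmu : 0 < mu) (hmuBar : 0 < muBar)
    (hd : 0 < d) (ha : 0 ≤ a) (hab : a < b)
    (ψ ψ' : ℝ → ℝ)
    (hbdd : ∃ M : ℝ, ∀ x, |ψ x| ≤ M)
    (hmeas : Measurable ψ)
    (hcont : ContinuousOn ψ (Set.Ici 0))
    (hdiff : ∀ x ∈ Set.Icc a b, HasDerivWithinAt ψ (ψ' x) (Set.Icc a b) x)
    (heq : ∀ x ∈ Set.Icc a b,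
      d * ψ' x + (lam + lamBar) * ψ x
        = lam / mu * Real.exp (-x / mu) * (∫ u in (0 : ℝ)..x, ψ u * Real.exp (u / mu))
          + lam * Real.exp (-x / mu)
          + lamBar / muBar * Real.exp (x / muBar)
              * ∫ u in Set.Ioi x, ψ u * Real.exp (-u / muBar)) :
    ∃ ψ'' : ℝ → ℝ, ∀ x ∈ Set.Icc a b,
      HasDerivWithinAt ψ' (ψ'' x) (Set.Icc a b) x ∧
      d * mu * ψ'' x + (d + mu * (lam + lamBar)) * ψ' x + lamBar * (1 + mu / muBar) * ψ x
        = lamBar / muBar * (1 + mu / muBar) * Real.exp (x / muBar)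
            * ∫ u in Set.Ioi x, ψ u * Real.exp (-u / muBar) := by
  obtain ⟨M, hM⟩ := hbdd
  have hφ : Continuous (fun u : ℝ => ψ (max u 0)) :=
    hcont.comp_continuous (by fun_prop) (fun x => Set.mem_Ici.2 (le_max_right _ _))
  have hc1 : Continuous (fun u : ℝ => ψ (max u 0) * Real.exp (u / mu)) :=
    hφ.mul (by fun_prop)
  have hc2 : Continuous (fun u : ℝ => ψ (max u 0) * Real.exp (-u / muBar)) :=
    hφ.mul (by fun_prop)
  have h1 : ∀ x, HasDerivAt (fun x => ∫ u in (0 : ℝ)..x, ψ (max u 0) * Real.exp (u / mu))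
      (ψ (max x 0) * Real.exp (x / mu)) x := fun x =>
    intervalIntegral.integral_hasDerivAt_right (hc1.intervalIntegrable _ _)
      hc1.stronglyMeasurable.stronglyMeasurableAtFilter hc1.continuousAt
  have h2 : ∀ x, HasDerivAt (fun x => ∫ u in (0 : ℝ)..x, ψ (max u 0) * Real.exp (-u / muBar))
      (ψ (max x 0) * Real.exp (-x / muBar)) x := fun x =>
    intervalIntegral.integral_hasDerivAt_right (hc2.intervalIntegrable _ _)
      hc2.stronglyMeasurable.stronglyMeasurableAtFilter hc2.continuousAt
  have hint : ∀ x, MeasureTheory.IntegrableOn (fun u : ℝ => ψ u * Real.exp (-u / muBar))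
      (Set.Ioi x) := by
    intro x
    have he : MeasureTheory.IntegrableOn (fun u : ℝ => Real.exp (-u / muBar)) (Set.Ioi x) := by
      have := integrableOn_exp_mul_Ioi (a := -1 / muBar)
        (div_neg_of_neg_of_pos (by norm_num) hmuBar) x
      refine this.congr_fun (fun u _ => ?_) measurableSet_Ioi
      show Real.exp _ = Real.exp _
      congr 1; ring
    exact he.bdd_mul (c := M) hmeas.aestronglyMeasurable
      (Filter.Eventually.of_forall fun u => by simpa using hM u)
  have e1 : ∀ x, 0 ≤ x → (∫ u in (0 : ℝ)..x, ψ u * Real.exp (u / mu))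
      = ∫ u in (0 : ℝ)..x, ψ (max u 0) * Real.exp (u / mu) := by
    intro x hx
    refine intervalIntegral.integral_congr (fun u hu => ?_)
    rw [Set.uIcc_of_le hx] at hu
    simp only [max_eq_left hu.1]
  have e2 : ∀ x, 0 ≤ x → (∫ u in Set.Ioi x, ψ u * Real.exp (-u / muBar))
      = (∫ u in Set.Ioi (0:ℝ), ψ u * Real.exp (-u / muBar))
        - ∫ u in (0 : ℝ)..x, ψ (max u 0) * Real.exp (-u / muBar) := by
    intro x hx
    have h3 : (∫ u in (0 : ℝ)..x, ψ (max u 0) * Real.exp (-u / muBar))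
        = ∫ u in (0 : ℝ)..x, ψ u * Real.exp (-u / muBar) := by
      refine intervalIntegral.integral_congr (fun u hu => ?_)
      rw [Set.uIcc_of_le hx] at hu
      simp only [max_eq_left hu.1]
    rw [h3, ← intervalIntegral.integral_Ioi_sub_Ioi (hint 0) hx]
    ring
  set C := ∫ u in Set.Ioi (0:ℝ), ψ u * Real.exp (-u / muBar) with hC
  refine ⟨fun x => (-(d * ψ' x + (lam + lamBar) * ψ x - lamBar / muBar * Real.exp (x / muBar)
      * ∫ u in Set.Ioi x, ψ u * Real.exp (-u / muBar)) / mu + lam / mu * ψ x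
      + lamBar / muBar * Real.exp (x / muBar)
      * (∫ u in Set.Ioi x, ψ u * Real.exp (-u / muBar)) / muBar - lamBar / muBar * ψ x
      - (lam + lamBar) * ψ' x) / d, fun x hx => ⟨?_, ?_⟩⟩
  · have hx0 : 0 ≤ x := ha.trans hx.1
    have hE1 : HasDerivAt (fun x : ℝ => Real.exp (-x / mu)) (Real.exp (-x / mu) * (-1 / mu)) x :=
      (((hasDerivAt_id x).neg).div_const mu).exp
    have hE2 : HasDerivAt (fun x : ℝ => Real.exp (x / muBar))
        (Real.exp (x / muBar) * (1 / muBar)) x :=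
      ((hasDerivAt_id x).div_const muBar).exp
    have hD := (((((hE1.const_mul (lam / mu)).mul (h1 x)).add (hE1.const_mul lam)).add
      ((hE2.const_mul (lamBar / muBar)).mul ((h2 x).const_sub C))).hasDerivWithinAt
        (s := Set.Icc a b)).sub ((hdiff x hx).const_mul (lam + lamBar))
    have hD' := hD.div_const d
    have key : ∀ y ∈ Set.Icc a b, ψ' y = (lam / mu * Real.exp (-y / mu)
        * (∫ u in (0 : ℝ)..y, ψ (max u 0) * Real.exp (u / mu))
          + lam * Real.exp (-y / mu)
          + lamBar / muBar * Real.exp (y / muBar)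
              * (C - ∫ u in (0 : ℝ)..y, ψ (max u 0) * Real.exp (-u / muBar))
          - (lam + lamBar) * ψ y) / d := by
      intro y hy
      have h := heq y hy
      rw [e1 y (ha.trans hy.1), e2 y (ha.trans hy.1)] at h
      rw [eq_div_iff hd.ne']
      linarith
    refine (hD'.congr_of_mem (fun y hy => ?_) hx).congr_deriv ?_
    · rw [key y hy]; rfl
    · have h := heq x hx
      beta_reduce
      rw [h, e1 x hx0, e2 x hx0, max_eq_left hx0]
      have p1 : Real.exp (-x / mu) * Real.exp (x / mu) = 1 := by
        rw [← Real.exp_add, neg_div, neg_add_cancel, Real.exp_zero]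
      have p2 : Real.exp (x / muBar) * Real.exp (-x / muBar) = 1 := by
        rw [← Real.exp_add, neg_div, add_neg_cancel, Real.exp_zero]
      congr 1
      linear_combination (lam / mu * ψ x) * p1 - (lamBar / muBar * ψ x) * p2
  · field_simp
    ring
end

section
/- Let λ > 0, λ̄ > 0, μ > 0, μ̄ > 0, d > 0 and 0 ≤ a < b. Let ψ : ℝ → ℝ be bounded, measurable, continuous on [0,∞), and differentiable on [a,b], and suppose that for all x ∈ [a,b]: d·ψ′(x) + (λ+λ̄)·ψ(x) = (λ/μ)·e^{−x/μ}·∫_0^x ψ(u)·e^{u/μ} du + λ·e^{−x/μ} + (λ̄/μ̄)·e^{x/μ̄}·∫_x^∞ ψ(u)·e^{−u/μ̄} du. Then ψ is three times differentiable on [a,b] and for all x ∈ [a,b]: d·μ·μ̄·ψ‴(x) + ( d·(μ̄−μ) + μ·μ̄·(λ+λ̄) )·ψ″(x) + ( λ̄·μ̄ − λ·μ − d )·ψ′(x) = 0. -/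
open Real Set intervalIntegral

theorem stmt_4 (lam lamBar mu muBar d a b : ℝ)
    (hlam : 0 < lam) (hlamBar : 0 < lamBar) (hmu : 0 < mu) (hmuBar : 0 < muBar)
    (hd : 0 < d) (ha : 0 ≤ a) (hab : a < b)
    (ψ ψ' : ℝ → ℝ)
    (hbdd : ∃ M : ℝ, ∀ x, |ψ x| ≤ M)
    (hmeas : Measurable ψ)
    (hcont : ContinuousOn ψ (Set.Ici 0))
    (hdiff : ∀ x ∈ Set.Icc a b, HasDerivWithinAt ψ (ψ' x) (Set.Icc a b) x)
    (heq : ∀ x ∈ Set.Icc a b,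
      d * ψ' x + (lam + lamBar) * ψ x
        = lam / mu * Real.exp (-x / mu) * (∫ u in (0 : ℝ)..x, ψ u * Real.exp (u / mu))
          + lam * Real.exp (-x / mu)
          + lamBar / muBar * Real.exp (x / muBar)
              * ∫ u in Set.Ioi x, ψ u * Real.exp (-u / muBar)) :
    ∃ ψ'' ψ''' : ℝ → ℝ, ∀ x ∈ Set.Icc a b,
      HasDerivWithinAt ψ' (ψ'' x) (Set.Icc a b) x ∧
      HasDerivWithinAt ψ'' (ψ''' x) (Set.Icc a b) x ∧
      d * mu * muBar * ψ''' x
        + (d * (muBar - mu) + mu * muBar * (lam + lamBar)) * ψ'' x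
        + (lamBar * muBar - lam * mu - d) * ψ' x = 0 := by
  obtain ⟨M, hM⟩ := hbdd
  set φ : ℝ → ℝ := fun u => ψ (max u 0) with hφ
  have hφc : Continuous φ := by
    refine hcont.comp_continuous (by fun_prop) (fun x => ?_)
    simp
  have hφe : ∀ u, 0 ≤ u → φ u = ψ u := fun u hu => by simp [hφ, max_eq_left hu]
  have hc1 : Continuous (fun u => φ u * Real.exp (u / mu)) := by fun_prop
  have hc2 : Continuous (fun u => φ u * Real.exp (-u / muBar)) := by fun_prop
  have hint : ∀ c : ℝ, MeasureTheory.IntegrableOn (fun u => φ u * Real.exp (-u / muBar)) (Set.Ioi c) := by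
    intro c
    have h0 : MeasureTheory.IntegrableOn (fun u : ℝ => Real.exp (-u / muBar)) (Set.Ioi c) := by
      have := integrableOn_exp_mul_Ioi (a := -1 / muBar) (by
        apply div_neg_of_neg_of_pos <;> linarith) c
      refine this.congr_fun (fun u _ => ?_) measurableSet_Ioi
      show Real.exp _ = Real.exp _
      congr 1; ring
    refine MeasureTheory.Integrable.bdd_mul (c := M) h0 hφc.aestronglyMeasurable ?_
    exact Filter.Eventually.of_forall (fun u => hM _)
  set I := ∫ u in Set.Ioi (0:ℝ), φ u * Real.exp (-u / muBar) with hI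
  let P : ℝ → ℝ := fun x => lam / mu * Real.exp (-x / mu) * (∫ u in (0 : ℝ)..x, φ u * Real.exp (u / mu))
          + lam * Real.exp (-x / mu)
  let Q : ℝ → ℝ := fun x => lamBar / muBar * Real.exp (x / muBar)
              * (I - ∫ u in (0 : ℝ)..x, φ u * Real.exp (-u / muBar))
  have hP : ∀ x, HasDerivAt P (-P x / mu + lam / mu * φ x) x := by
    intro x
    have h1 := hc1.integral_hasStrictDerivAt 0 x |>.hasDerivAt
    have h2 : HasDerivAt (fun x : ℝ => Real.exp (-x / mu)) (Real.exp (-x / mu) * (-1 / mu)) x :=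
      (((hasDerivAt_id x).neg).div_const mu).exp
    have h3 := ((h2.const_mul (lam / mu)).mul h1).add (h2.const_mul lam)
    refine h3.congr_deriv ?_
    have he : Real.exp (-x / mu) * Real.exp (x / mu) = 1 := by
      rw [← Real.exp_add]; simp [neg_div]
    simp only [P]
    linear_combination (lam / mu * φ x) * he
  have hQ : ∀ x, HasDerivAt Q (Q x / muBar - lamBar / muBar * φ x) x := by
    intro x
    have h1 := hc2.integral_hasStrictDerivAt 0 x |>.hasDerivAt
    have h2 : HasDerivAt (fun x : ℝ => Real.exp (x / muBar)) (Real.exp (x / muBar) * (1 / muBar)) x :=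
      ((hasDerivAt_id x).div_const muBar).exp
    have h3 := ((h2.const_mul (lamBar / muBar)).mul (h1.const_sub I))
    refine h3.congr_deriv ?_
    have he : Real.exp (x / muBar) * Real.exp (-x / muBar) = 1 := by
      rw [← Real.exp_add]; simp [neg_div]
    simp only [Q]
    linear_combination (-lamBar / muBar * φ x) * he
  have key : ∀ x ∈ Set.Icc a b, ψ' x = (P x + Q x - (lam + lamBar) * ψ x) / d := by
    intro x hx
    have hx0 : 0 ≤ x := ha.trans hx.1
    have e1 : (∫ u in (0 : ℝ)..x, ψ u * Real.exp (u / mu)) = ∫ u in (0 : ℝ)..x, φ u * Real.exp (u / mu) := by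
      refine intervalIntegral.integral_congr (fun u hu => ?_)
      rw [Set.uIcc_of_le hx0] at hu
      simp only [hφe u hu.1]
    have e2 : (∫ u in Set.Ioi x, ψ u * Real.exp (-u / muBar)) = ∫ u in Set.Ioi x, φ u * Real.exp (-u / muBar) := by
      refine MeasureTheory.setIntegral_congr_fun measurableSet_Ioi (fun u hu => ?_)
      simp only [hφe u (hx0.trans (le_of_lt hu))]
    have e3 := intervalIntegral.integral_Ioi_sub_Ioi (hint 0) hx0
    have h := heq x hx
    rw [e1, e2] at h
    have e4 : (∫ u in Set.Ioi x, φ u * Real.exp (-u / muBar)) = I - ∫ u in (0 : ℝ)..x, φ u * Real.exp (-u / muBar) := by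
      rw [hI]; linarith
    rw [e4] at h
    rw [eq_div_iff hd.ne']
    simp only [P, Q]
    linarith
  have hP' : ∀ x ∈ Set.Icc a b, HasDerivWithinAt P (-P x / mu + lam / mu * ψ x) (Set.Icc a b) x := by
    intro x hx
    rw [← hφe x (ha.trans hx.1)]; exact (hP x).hasDerivWithinAt
  have hQ' : ∀ x ∈ Set.Icc a b, HasDerivWithinAt Q (Q x / muBar - lamBar / muBar * ψ x) (Set.Icc a b) x := by
    intro x hx
    rw [← hφe x (ha.trans hx.1)]; exact (hQ x).hasDerivWithinAt
  let P1 : ℝ → ℝ := fun x => -P x / mu + lam / mu * ψ x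
  let Q1 : ℝ → ℝ := fun x => Q x / muBar - lamBar / muBar * ψ x
  let p2 : ℝ → ℝ := fun x => (P1 x + Q1 x - (lam + lamBar) * ψ' x) / d
  refine ⟨p2, fun x => ((-P1 x / mu + lam / mu * ψ' x) + (Q1 x / muBar - lamBar / muBar * ψ' x)
    - (lam + lamBar) * p2 x) / d, fun x hx => ?_⟩
  have d2 : ∀ x ∈ Set.Icc a b, HasDerivWithinAt ψ' (p2 x) (Set.Icc a b) x := by
    intro x hx
    exact ((((hP' x hx).add (hQ' x hx)).sub ((hdiff x hx).const_mul (lam + lamBar))).div_const d).congr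
      key (key x hx)
  refine ⟨d2 x hx, ?_, ?_⟩
  · have hp1 : HasDerivWithinAt P1 (-P1 x / mu + lam / mu * ψ' x) (Set.Icc a b) x :=
      ((hP' x hx).neg.div_const mu).add ((hdiff x hx).const_mul _)
    have hq1 : HasDerivWithinAt Q1 (Q1 x / muBar - lamBar / muBar * ψ' x) (Set.Icc a b) x :=
      ((hQ' x hx).div_const muBar).sub ((hdiff x hx).const_mul _)
    exact ((hp1.add hq1).sub ((d2 x hx).const_mul (lam + lamBar))).div_const d
  · have hk := key x hx
    simp only [p2, P1, Q1]
    rw [hk]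
    field_simp
    ring
end

section
/- Let λ > 0, λ̄ > 0, μ > 0, μ̄ > 0, d > 0, δ > 0 and 0 ≤ a < b. Let v : ℝ → ℝ be bounded, measurable, continuous on [0,∞), and differentiable on [a,b], and suppose that for all x ∈ [a,b]: d·v′(x) + (λ+λ̄+δ)·v(x) = (λ/μ)·e^{−x/μ}·∫_0^x v(u)·e^{u/μ} du + (λ̄/μ̄)·e^{x/μ̄}·∫_x^∞ v(u)·e^{−u/μ̄} du + d. Then v is three times differentiable on [a,b] and for all x ∈ [a,b]: d·μ·μ̄·v‴(x) + ( d·(μ̄−μ) + μ·μ̄·(λ+λ̄+δ) )·v″(x) + ( μ̄·(λ̄+δ) − μ·(λ+δ) − d )·v′(x) − δ·v(x) = −d. -/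
open Real Set intervalIntegral

theorem stmt_5 (lam lamBar mu muBar d δ a b : ℝ)
    (hlam : 0 < lam) (hlamBar : 0 < lamBar) (hmu : 0 < mu) (hmuBar : 0 < muBar)
    (hd : 0 < d) (hδ : 0 < δ) (ha : 0 ≤ a) (hab : a < b)
    (v v' : ℝ → ℝ)
    (hbdd : ∃ M : ℝ, ∀ x, |v x| ≤ M)
    (hmeas : Measurable v)
    (hcont : ContinuousOn v (Set.Ici 0))
    (hdiff : ∀ x ∈ Set.Icc a b, HasDerivWithinAt v (v' x) (Set.Icc a b) x)
    (heq : ∀ x ∈ Set.Icc a b,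
      d * v' x + (lam + lamBar + δ) * v x
        = lam / mu * Real.exp (-x / mu) * (∫ u in (0 : ℝ)..x, v u * Real.exp (u / mu))
          + lamBar / muBar * Real.exp (x / muBar)
              * (∫ u in Set.Ioi x, v u * Real.exp (-u / muBar))
          + d) :
    ∃ v'' v''' : ℝ → ℝ, ∀ x ∈ Set.Icc a b,
      HasDerivWithinAt v' (v'' x) (Set.Icc a b) x ∧
      HasDerivWithinAt v'' (v''' x) (Set.Icc a b) x ∧
      d * mu * muBar * v''' x
        + (d * (muBar - mu) + mu * muBar * (lam + lamBar + δ)) * v'' x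
        + (muBar * (lamBar + δ) - mu * (lam + δ) - d) * v' x
        - δ * v x = -d := by
  obtain ⟨M, hM⟩ := hbdd
  set w : ℝ → ℝ := fun u => v (max u 0) with hw
  have hwc : Continuous w :=
    hcont.comp_continuous (by fun_prop) (fun u => by simp)
  have hwv : ∀ u, 0 ≤ u → w u = v u := fun u hu => by simp [hw, max_eq_left hu]
  set F : ℝ → ℝ := fun x => ∫ u in (0 : ℝ)..x, w u * Real.exp (u / mu) with hF
  set G : ℝ → ℝ := fun x => ∫ u in (0 : ℝ)..x, w u * Real.exp (-u / muBar) with hG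
  set C : ℝ := ∫ u in Set.Ioi (0 : ℝ), w u * Real.exp (-u / muBar) with hC
  have hint : MeasureTheory.IntegrableOn (fun u => w u * Real.exp (-u / muBar)) (Set.Ioi 0) := by
    have h1 : MeasureTheory.IntegrableOn (fun u => Real.exp (-u / muBar)) (Set.Ioi 0) := by
      have := exp_neg_integrableOn_Ioi 0 (inv_pos.mpr hmuBar)
      refine this.congr_fun (fun u _ => ?_) measurableSet_Ioi
      simp only
      congr 1
      ring
    refine MeasureTheory.Integrable.bdd_mul (c := M) h1 hwc.aestronglyMeasurable ?_
    exact Filter.Eventually.of_forall (fun u => hM _)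
  have hFd : ∀ x, HasDerivAt F (w x * Real.exp (x / mu)) x := fun x => by
    have hc : Continuous (fun u => w u * Real.exp (u / mu)) := by fun_prop
    exact intervalIntegral.integral_hasDerivAt_right (hc.intervalIntegrable _ _)
      (hc.stronglyMeasurableAtFilter _ _) hc.continuousAt
  have hGd : ∀ x, HasDerivAt G (w x * Real.exp (-x / muBar)) x := fun x => by
    have hc : Continuous (fun u => w u * Real.exp (-u / muBar)) := by fun_prop
    exact intervalIntegral.integral_hasDerivAt_right (hc.intervalIntegrable _ _)
      (hc.stronglyMeasurableAtFilter _ _) hc.continuousAt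
  set I : ℝ → ℝ := fun x => lam / mu * Real.exp (-x / mu) * F x with hI
  set J : ℝ → ℝ := fun x => lamBar / muBar * Real.exp (x / muBar) * (C - G x) with hJ
  have hId : ∀ x, HasDerivAt I (-I x / mu + lam / mu * w x) x := fun x => by
    have h1 : HasDerivAt (fun x : ℝ => lam / mu * Real.exp (-x / mu))
        (lam / mu * (Real.exp (-x / mu) * (-1 / mu))) x :=
      (((hasDerivAt_id x).neg.div_const mu).exp).const_mul _
    refine (h1.mul (hFd x)).congr_deriv ?_
    have e : Real.exp (-x / mu) * Real.exp (x / mu) = 1 := by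
      rw [← Real.exp_add]; simp [neg_div]
    simp only [hI]
    linear_combination (lam / mu * w x) * e
  have hJd : ∀ x, HasDerivAt J (J x / muBar - lamBar / muBar * w x) x := fun x => by
    have h1 : HasDerivAt (fun x : ℝ => lamBar / muBar * Real.exp (x / muBar))
        (lamBar / muBar * (Real.exp (x / muBar) * (1 / muBar))) x :=
      (((hasDerivAt_id x).div_const muBar).exp).const_mul _
    refine (h1.mul ((hGd x).const_sub C)).congr_deriv ?_
    have e : Real.exp (x / muBar) * Real.exp (-x / muBar) = 1 := by
      rw [← Real.exp_add]; simp [neg_div]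
    simp only [hJ]
    linear_combination (-lamBar / muBar * w x) * e
  have heq' : ∀ x ∈ Set.Icc a b,
      v' x = (I x + J x + d - (lam + lamBar + δ) * v x) / d := fun x hx => by
    have hx0 : 0 ≤ x := ha.trans hx.1
    have e1 : (∫ u in (0 : ℝ)..x, v u * Real.exp (u / mu)) = F x := by
      refine intervalIntegral.integral_congr (fun u hu => ?_)
      rw [Set.uIcc_of_le hx0] at hu
      simp only [hwv u hu.1]
    have e2 : (∫ u in Set.Ioi x, v u * Real.exp (-u / muBar)) = C - G x := by
      have e3 : (∫ u in Set.Ioi x, v u * Real.exp (-u / muBar))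
          = ∫ u in Set.Ioi x, w u * Real.exp (-u / muBar) := by
        refine MeasureTheory.setIntegral_congr_fun measurableSet_Ioi (fun u hu => ?_)
        simp only [hwv u (hx0.trans (le_of_lt hu))]
      have := intervalIntegral.integral_interval_add_Ioi hint
        (hint.mono_set (Set.Ioi_subset_Ioi hx0))
      rw [e3]
      simp only [hC, hG]
      linarith
    have h := heq x hx
    rw [e1, e2] at h
    rw [eq_div_iff hd.ne']
    simp only [hI, hJ]
    linarith
  have hwd : ∀ x ∈ Set.Icc a b, HasDerivWithinAt w (v' x) (Set.Icc a b) x := fun x hx =>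
    (hdiff x hx).congr (fun y hy => hwv y (ha.trans hy.1)) (hwv x (ha.trans hx.1))
  set v2 : ℝ → ℝ := fun x => ((-I x / mu + lam / mu * w x) + (J x / muBar - lamBar / muBar * w x)
    - (lam + lamBar + δ) * v' x) / d with hv2
  have hv2d : ∀ x ∈ Set.Icc a b, HasDerivWithinAt v' (v2 x) (Set.Icc a b) x := fun x hx => by
    have h := (((((hId x).add (hJd x)).add_const d).hasDerivWithinAt (s := Set.Icc a b)).sub
      ((hdiff x hx).const_mul (lam + lamBar + δ))).div_const d
    exact h.congr heq' (heq' x hx)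
  refine ⟨v2, fun x => ((-(-I x / mu + lam / mu * w x) / mu + lam / mu * v' x)
    + ((J x / muBar - lamBar / muBar * w x) / muBar - lamBar / muBar * v' x)
    - (lam + lamBar + δ) * v2 x) / d, fun x hx => ⟨hv2d x hx, ?_, ?_⟩⟩
  · have hi := (hId x).hasDerivWithinAt (s := Set.Icc a b)
    have hj := (hJd x).hasDerivWithinAt (s := Set.Icc a b)
    exact ((((hi.neg.div_const mu).add ((hwd x hx).const_mul (lam / mu))).add
      ((hj.div_const muBar).sub ((hwd x hx).const_mul (lamBar / muBar)))).sub
      ((hv2d x hx).const_mul (lam + lamBar + δ))).div_const d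
  · have h1 : d * v' x = I x + J x + d - (lam + lamBar + δ) * v x := by
      rw [heq' x hx]; field_simp
    have h2 : d * v2 x = ((-I x / mu + lam / mu * v x) + (J x / muBar - lamBar / muBar * v x)
        - (lam + lamBar + δ) * v' x) := by
      simp only [hv2, hwv x (ha.trans hx.1)]; field_simp
    beta_reduce
    rw [hwv x (ha.trans hx.1)]
    clear_value v2 I J
    generalize v2 x = y2 at h1 h2 ⊢
    generalize v' x = y1 at h1 h2 ⊢
    generalize I x = i at h1 h2 ⊢
    generalize J x = j at h1 h2 ⊢
    generalize v x = y at h1 h2 ⊢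
    have hj : j = d * y1 - i - d + (lam + lamBar + δ) * y := by linarith
    subst hj
    field_simp at h2 ⊢
    linear_combination (muBar - mu) * h2
end

section
/- Let λ > 0, λ̄ > 0, μ > 0, μ̄ > 0 with λ̄·μ̄ > λ·μ. Define ψ*(x) = ( λ·(μ+μ̄)/( μ̄·(λ+λ̄) ) )·exp( −( (λ̄·μ̄ − λ·μ)/( μ·μ̄·(λ+λ̄) ) )·x ) for x ≥ 0. Then for every x ≥ 0: (λ+λ̄)·ψ*(x) = (λ/μ)·e^{−x/μ}·∫_0^x ψ*(u)·e^{u/μ} du + λ·e^{−x/μ} + (λ̄/μ̄)·e^{x/μ̄}·∫_x^∞ ψ*(u)·e^{−u/μ̄} du. -/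
open Real Set intervalIntegral

theorem stmt_14 (lam lamBar mu muBar : ℝ)
    (hlam : 0 < lam) (hlamBar : 0 < lamBar) (hmu : 0 < mu) (hmuBar : 0 < muBar)
    (hnet : lamBar * muBar > lam * mu)
    (ψ : ℝ → ℝ)
    (hψ : ∀ x : ℝ, 0 ≤ x →
      ψ x = lam * (mu + muBar) / (muBar * (lam + lamBar))
          * Real.exp (-((lamBar * muBar - lam * mu) / (mu * muBar * (lam + lamBar))) * x)) :
    ∀ x : ℝ, 0 ≤ x →
      (lam + lamBar) * ψ x
        = lam / mu * Real.exp (-x / mu) * (∫ u in (0 : ℝ)..x, ψ u * Real.exp (u / mu))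
          + lam * Real.exp (-x / mu)
          + lamBar / muBar * Real.exp (x / muBar)
              * ∫ u in Set.Ioi x, ψ u * Real.exp (-u / muBar) := by
  intro x hx
  have hS : 0 < lam + lamBar := by positivity
  obtain ⟨C, hC⟩ : ∃ C, C = lam * (mu + muBar) / (muBar * (lam + lamBar)) := ⟨_, rfl⟩
  obtain ⟨r, hr⟩ : ∃ r, r = (lamBar * muBar - lam * mu) / (mu * muBar * (lam + lamBar)) :=
    ⟨_, rfl⟩
  rw [← hC, ← hr] at hψ
  have hCpos : 0 < C := by rw [hC]; positivity
  have ha : -r + 1 / mu = C / mu := by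
    rw [hC, hr]; field_simp; ring
  have hb : r + 1 / muBar = C * lamBar / (lam * mu) := by
    rw [hC, hr]; field_simp; ring
  have hSC : (lam + lamBar) * C = lam + lam * mu / muBar := by
    rw [hC]; field_simp; ring
  have hapos : 0 < C / mu := by positivity
  have hbpos : 0 < C * lamBar / (lam * mu) := by positivity
  have h1 : (∫ u in (0 : ℝ)..x, ψ u * Real.exp (u / mu))
      = mu * (Real.exp (C / mu * x) - 1) := by
    have e : (∫ u in (0 : ℝ)..x, ψ u * Real.exp (u / mu))
        = ∫ u in (0 : ℝ)..x, C * Real.exp (C / mu * u) := by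
      apply intervalIntegral.integral_congr
      intro u hu
      rw [Set.uIcc_of_le hx] at hu
      simp only
      rw [hψ u hu.1, mul_assoc, ← Real.exp_add, ← ha]
      congr 2; ring
    rw [e, intervalIntegral.integral_const_mul,
      intervalIntegral.integral_comp_mul_left (fun u => Real.exp u) hapos.ne', integral_exp]
    simp only [mul_zero, Real.exp_zero, smul_eq_mul]
    field_simp
  have h2 : (∫ u in Set.Ioi x, ψ u * Real.exp (-u / muBar))
      = lam * mu / lamBar * Real.exp (-(r + 1 / muBar) * x) := by
    have e : (∫ u in Set.Ioi x, ψ u * Real.exp (-u / muBar))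
        = ∫ u in Set.Ioi x, C * Real.exp (-(r + 1 / muBar) * u) := by
      apply MeasureTheory.setIntegral_congr_fun measurableSet_Ioi
      intro u hu
      simp only
      rw [hψ u (hx.trans (le_of_lt hu)), mul_assoc, ← Real.exp_add]
      congr 2; ring
    rw [e, MeasureTheory.integral_const_mul,
      integral_exp_mul_Ioi (by rw [hb]; linarith) x]
    generalize Real.exp (-(r + 1 / muBar) * x) = E
    rw [hb]
    field_simp
  have e1 : Real.exp (-x / mu) * Real.exp (C / mu * x) = Real.exp (-r * x) := by
    rw [← Real.exp_add, ← ha]; congr 1; ring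
  have e2 : Real.exp (x / muBar) * Real.exp (-(r + 1 / muBar) * x) = Real.exp (-r * x) := by
    rw [← Real.exp_add]; congr 1; ring
  rw [h1, h2, hψ x hx, ← mul_assoc, hSC]
  have t1 : lam / mu * Real.exp (-x / mu) * (mu * (Real.exp (C / mu * x) - 1))
      = lam * Real.exp (-r * x) - lam * Real.exp (-x / mu) := by
    rw [← e1]; field_simp
  have t2 : lamBar / muBar * Real.exp (x / muBar)
      * (lam * mu / lamBar * Real.exp (-(r + 1 / muBar) * x))
      = lam * mu / muBar * Real.exp (-r * x) := by
    rw [← e2]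
    generalize Real.exp (-(r + 1 / muBar) * x) = E
    generalize Real.exp (x / muBar) = F
    field_simp
  rw [t1, t2]; ring
end
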